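/- arXiv:math/0610841 — 5 statements merged into one kernel-verified Lean document; each statement's English description precedes it below -/
import Mathlib

section
/- Let 0 < γ < 1 and 0 < α < 1. For every measurable set R ⊆ (0,1) that is symmetric (for all x ∈ (0,1), x ∈ R if and only if 1 − x ∈ R) and has Lebesgue measure α, the power of R against f₁ is at most the power of the central region: ∫_R (1+γ)x^γ dx ≤ ∫_{C_α} (1+γ)x^γ dx. (For concave alternatives the central test is the most powerful symmetric size-α test.) -/
open MeasureTheory Set

/-!
The integral of `f` over a set invariant under the reflection `x ↦ a + b - x` is half the integral
of the symmetrized function `f x + f (a + b - x)`. When `f` is concave, the symmetrized function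
decreases as `x` moves away from the midpoint, so a central interval is a superlevel set of it up to
ties, and such a set has the largest integral among the sets of its measure (Neyman–Pearson).
-/

theorem add_le_add_of_concaveOn_of_mem_segment {𝕜 E β : Type*} [Semiring 𝕜] [PartialOrder 𝕜]
    [AddCommGroup E] [Module 𝕜 E] [AddCommMonoid β] [PartialOrder β] [IsOrderedAddMonoid β]
    [Module 𝕜 β] {s : Set E} {f : E → β} (hf : ConcaveOn 𝕜 s f) {x y u v : E} (hx : x ∈ s)
    (hy : y ∈ s) (hu : u ∈ segment 𝕜 x y) (hsum : u + v = x + y) :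
    f x + f y ≤ f u + f v := by
  obtain ⟨p, q, hp, hq, hpq, rfl⟩ := hu
  have hqp : q + p = 1 := by rwa [add_comm]
  obtain rfl : v = q • x + p • y := by
    apply add_left_cancel (a := p • x + q • y)
    rw [hsum, add_add_add_comm, ← add_smul, ← add_smul, hpq, hqp, one_smul, one_smul]
  calc
    f x + f y = (p • f x + q • f y) + (q • f x + p • f y) := by
      rw [add_add_add_comm, ← add_smul, ← add_smul, hpq, hqp, one_smul, one_smul]
    _ ≤ f (p • x + q • y) + f (q • x + p • y) :=
      add_le_add (hf.2 hx hy hp hq hpq) (hf.2 hx hy hq hp hqp)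

theorem add_apply_sub_le_of_concaveOn_Ioo {f : ℝ → ℝ} {a b x y : ℝ}
    (hf : ConcaveOn ℝ (Ioo a b) f) (hx : x ∈ Ioo a b) (hy : y ∈ uIcc x (a + b - x)) :
    f x + f (a + b - x) ≤ f y + f (a + b - y) :=
  add_le_add_of_concaveOn_of_mem_segment hf hx ⟨by linarith [hx.2], by linarith [hx.1]⟩
    (segment_eq_uIcc x (a + b - x) ▸ hy) (by ring)

theorem concaveOn_Ioo_const_mul_rpow {a b c p : ℝ} (ha : 0 ≤ a) (hc : 0 ≤ c) (hp0 : 0 ≤ p)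
    (hp1 : p ≤ 1) : ConcaveOn ℝ (Ioo a b) fun x ↦ c * x ^ p :=
  ((Real.concaveOn_rpow hp0 hp1).subset (fun _ hx ↦ ha.trans hx.1.le) (convex_Ioo a b)).smul hc

theorem integrableOn_Ioo_const_mul_rpow {p : ℝ} (hp : 0 ≤ p) (a b c : ℝ) :
    IntegrableOn (fun x : ℝ ↦ c * x ^ p) (Ioo a b) :=
  ((Real.continuous_rpow_const hp).const_mul c).integrableOn_Icc.mono_set Ioo_subset_Icc_self

section Measure

variable {X E : Type*} [MeasurableSpace X] [NormedAddCommGroup E] {μ : Measure X} {S C : Set X}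
  {φ : X → X}

theorem integrableOn_comp_of_preimage_eq {g : X → E} (hφ : MeasurePreserving φ μ μ)
    (hφe : MeasurableEmbedding φ) (hS : φ ⁻¹' S = S) (hg : IntegrableOn g S μ) :
    IntegrableOn (fun x ↦ g (φ x)) S μ := by
  simpa only [hS] using! (hφ.integrableOn_comp_preimage hφe).2 hg

theorem setIntegral_add_comp_of_preimage_eq [NormedSpace ℝ E] {g : X → E}
    (hφ : MeasurePreserving φ μ μ) (hφe : MeasurableEmbedding φ) (hS : φ ⁻¹' S = S)
    (hg : IntegrableOn g S μ) :
    ∫ x in S, (g x + g (φ x)) ∂μ = ∫ x in S, g x ∂μ + ∫ x in S, g x ∂μ := by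
  have hcomp : ∫ x in S, g (φ x) ∂μ = ∫ x in S, g x ∂μ := by
    simpa only [hS] using hφ.setIntegral_preimage_emb hφe g S
  rw [integral_add hg (integrableOn_comp_of_preimage_eq hφ hφe hS hg), hcomp]

theorem setIntegral_le_setIntegral_of_threshold {f : X → ℝ} {c : ℝ}
    (hSm : NullMeasurableSet S μ) (hCm : NullMeasurableSet C μ)
    (hμ : μ S = μ C) (hS : μ S ≠ ⊤) (hfS : IntegrableOn f S μ) (hfC : IntegrableOn f C μ)
    (hle : ∀ x ∈ S \ C, f x ≤ c) (hge : ∀ x ∈ C \ S, c ≤ f x) :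
    ∫ x in S, f x ∂μ ≤ ∫ x in C, f x ∂μ := by
  have hdiff : μ (S \ C) = μ (C \ S) :=
    measure_sdiff_symm hSm hCm hμ (measure_ne_top_of_subset inter_subset_left hS)
  have hSC : μ (S \ C) ≠ ⊤ := measure_ne_top_of_subset sdiff_subset hS
  calc
    ∫ x in S, f x ∂μ = ∫ x in S ∩ C, f x ∂μ + ∫ x in S \ C, f x ∂μ :=
      (integral_inter_add_sdiff₀ hCm hfS).symm
    _ ≤ ∫ x in S ∩ C, f x ∂μ + ∫ _ in S \ C, c ∂μ :=
      add_le_add_right (setIntegral_mono_on₀ (hfS.mono_set sdiff_subset)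
        (integrableOn_const hSC) (hSm.diff hCm) hle) _
    _ = ∫ x in C ∩ S, f x ∂μ + ∫ _ in C \ S, c ∂μ := by
      rw [inter_comm, setIntegral_const, setIntegral_const, measureReal_def, measureReal_def, hdiff]
    _ ≤ ∫ x in C ∩ S, f x ∂μ + ∫ x in C \ S, f x ∂μ :=
      add_le_add_right (setIntegral_mono_on₀ (integrableOn_const (hdiff ▸ hSC))
        (hfC.mono_set sdiff_subset) (hCm.diff hSm) hge) _
    _ = ∫ x in C, f x ∂μ := integral_inter_add_sdiff₀ hSm hfC

theorem setIntegral_le_setIntegral_of_add_comp_threshold {f : X → ℝ} {c : ℝ}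
    (hφ : MeasurePreserving φ μ μ) (hφe : MeasurableEmbedding φ)
    (hSφ : φ ⁻¹' S = S) (hCφ : φ ⁻¹' C = C)
    (hSm : NullMeasurableSet S μ) (hCm : NullMeasurableSet C μ) (hμ : μ S = μ C) (hS : μ S ≠ ⊤)
    (hfS : IntegrableOn f S μ) (hfC : IntegrableOn f C μ)
    (hle : ∀ x ∈ S \ C, f x + f (φ x) ≤ c) (hge : ∀ x ∈ C \ S, c ≤ f x + f (φ x)) :
    ∫ x in S, f x ∂μ ≤ ∫ x in C, f x ∂μ := by
  have hsymm : ∫ x in S, (f x + f (φ x)) ∂μ ≤ ∫ x in C, (f x + f (φ x)) ∂μ :=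
    setIntegral_le_setIntegral_of_threshold hSm hCm hμ hS
      (hfS.add (integrableOn_comp_of_preimage_eq hφ hφe hSφ hfS))
      (hfC.add (integrableOn_comp_of_preimage_eq hφ hφe hCφ hfC)) hle hge
  rw [setIntegral_add_comp_of_preimage_eq hφ hφe hSφ hfS,
    setIntegral_add_comp_of_preimage_eq hφ hφe hCφ hfC] at hsymm
  linarith

end Measure

theorem central_most_powerful_concave_general {f : ℝ → ℝ} {a b α : ℝ}
    (hf : ConcaveOn ℝ (Ioo a b) f) (hfint : IntegrableOn f (Ioo a b))
    (hα0 : 0 ≤ α) (hα1 : α < b - a) {R : Set ℝ} (hRmeas : NullMeasurableSet R)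
    (hRsub : R ⊆ Ioo a b) (hRsym : ∀ x ∈ Ioo a b, x ∈ R ↔ a + b - x ∈ R)
    (hRvol : volume R = ENNReal.ofReal α) :
    ∫ x in R, f x ≤ ∫ x in Ioo ((a + b) / 2 - α / 2) ((a + b) / 2 + α / 2), f x := by
  set u := (a + b) / 2 - α / 2 with hu
  set v := (a + b) / 2 + α / 2 with hv
  have hCsub : Ioo u v ⊆ Ioo a b := Ioo_subset_Ioo (by linarith) (by linarith)
  have hCvol : volume (Ioo u v) = ENNReal.ofReal α := by
    rw [Real.volume_Ioo]
    congr 1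
    ring
  have hRpre : (a + b - ·) ⁻¹' R = R := by
    ext x
    exact ⟨fun h ↦ by simpa using (hRsym _ (hRsub h)).1 h, fun h ↦ (hRsym x (hRsub h)).1 h⟩
  have hCpre : (a + b - ·) ⁻¹' Ioo u v = Ioo u v := by
    rw [preimage_const_sub_Ioo]
    congr 1 <;> ring
  have hle : ∀ x ∈ R \ Ioo u v, f x + f (a + b - x) ≤ f u + f (a + b - u) := fun x hx ↦
    have hux : u ∈ uIcc x (a + b - x) := by grind [mem_uIcc]
    add_apply_sub_le_of_concaveOn_Ioo hf (hRsub hx.1) hux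
  have hge : ∀ x ∈ Ioo u v \ R, f u + f (a + b - u) ≤ f x + f (a + b - x) := fun x hx ↦
    have hxu : x ∈ uIcc u (a + b - u) := by grind [mem_uIcc]
    add_apply_sub_le_of_concaveOn_Ioo hf ⟨by linarith, by linarith⟩ hxu
  exact setIntegral_le_setIntegral_of_add_comp_threshold
    (Measure.measurePreserving_sub_left volume (a + b)) (measurableEmbedding_subLeft (a + b))
    hRpre hCpre hRmeas measurableSet_Ioo.nullMeasurableSet (hRvol.trans hCvol.symm)
    (hRvol ▸ ENNReal.ofReal_ne_top) (hfint.mono_set hRsub) (hfint.mono_set hCsub) hle hge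

theorem central_most_powerful_concave (γ α : ℝ) (hγ0 : 0 < γ) (hγ1 : γ < 1)
    (hα0 : 0 < α) (hα1 : α < 1) (R : Set ℝ)
    (hRmeas : MeasurableSet R) (hRsub : R ⊆ Ioo 0 1)
    (hRsym : ∀ x ∈ Ioo (0:ℝ) 1, x ∈ R ↔ 1 - x ∈ R)
    (hRvol : volume R = ENNReal.ofReal α) :
    ∫ x in R, (1+γ) * x ^ γ ∂volume ≤
      ∫ x in Ioo (1/2 - α/2 : ℝ) (1/2 + α/2), (1+γ) * x ^ γ ∂volume := by
  simpa using central_most_powerful_concave_general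
    (concaveOn_Ioo_const_mul_rpow le_rfl (by linarith) hγ0.le hγ1.le)
    (integrableOn_Ioo_const_mul_rpow hγ0.le 0 1 (1 + γ)) hα0.le (by simpa using hα1)
    hRmeas.nullMeasurableSet hRsub (by simpa using hRsym) hRvol
end

section
/- Let 0 < γ < 1 and 0 < α < 1. For every measurable set R ⊆ (0,1) that is symmetric (for all x ∈ (0,1), x ∈ R if and only if 1 − x ∈ R) and has Lebesgue measure α, the power of R against f₁ is at least the power of the extreme-tails region: ∫_R (1+γ)x^γ dx ≥ ∫_{E_α} (1+γ)x^γ dx. (For concave alternatives the extreme-tails test, which is the maximum-likelihood-ratio test, is the least powerful symmetric size-α test.) -/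
open MeasureTheory Set

/-!
Replacing `f` by its fold `x ↦ f x + f (a + b - x)` doubles the integral over every region symmetric
about the midpoint of `(a, b)`. If `f` is concave, its fold increases towards the midpoint, so it is
at most as large on the extreme tails as anywhere else in `(a, b)`. The tails thus collect the least
mass among all regions of their size, as in the Neyman–Pearson lemma: discard what the two regions
have in common, and separate the values of the fold on the remainders by a constant.
-/

section Exchange

variable {X : Type*} [MeasurableSpace X] {μ : Measure X} {g : X → ℝ} {s t : Set X}

lemma setIntegral_le_setIntegral_of_forall_le (hs : MeasurableSet s) (ht : MeasurableSet t)
    (hgs : IntegrableOn g s μ) (hgt : IntegrableOn g t μ) (hst : μ s = μ t) (hfin : μ s ≠ ⊤)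
    (hle : ∀ x ∈ s, ∀ y ∈ t, g x ≤ g y) : ∫ x in s, g x ∂μ ≤ ∫ x in t, g x ∂μ := by
  by_cases hs0 : μ s = 0
  · rw [setIntegral_measure_zero g hs0, setIntegral_measure_zero g (hst ▸ hs0)]
  have hsne : s.Nonempty := nonempty_of_measure_ne_zero hs0
  have htne : t.Nonempty := nonempty_of_measure_ne_zero (hst ▸ hs0)
  obtain ⟨c, hsc, hct⟩ := exists_between_of_forall_le (hsne.image g) (htne.image g)
    (forall_mem_image.2 fun x hx ↦ forall_mem_image.2 (hle x hx))
  calc ∫ x in s, g x ∂μ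
      ≤ ∫ _ in s, c ∂μ := setIntegral_mono_on hgs (integrableOn_const hfin) hs
        fun x hx ↦ hsc (mem_image_of_mem g hx)
    _ = ∫ _ in t, c ∂μ := by simp only [setIntegral_const, measureReal_def, hst]
    _ ≤ ∫ x in t, g x ∂μ := setIntegral_mono_on (integrableOn_const (hst ▸ hfin)) hgt ht
        fun y hy ↦ hct (mem_image_of_mem g hy)

lemma setIntegral_le_setIntegral_of_forall_sdiff_le (hs : MeasurableSet s) (ht : MeasurableSet t)
    (hgs : IntegrableOn g s μ) (hgt : IntegrableOn g t μ) (hst : μ s = μ t) (hfin : μ s ≠ ⊤)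
    (hle : ∀ x ∈ s \ t, ∀ y ∈ t \ s, g x ≤ g y) : ∫ x in s, g x ∂μ ≤ ∫ x in t, g x ∂μ := by
  have hsdiff : μ (s \ t) = μ (t \ s) := measure_sdiff_symm hs.nullMeasurableSet
    ht.nullMeasurableSet hst (measure_ne_top_of_subset inter_subset_left hfin)
  rw [← integral_inter_add_sdiff ht hgs, ← integral_inter_add_sdiff hs hgt, inter_comm t s]
  gcongr 1
  exact setIntegral_le_setIntegral_of_forall_le (hs.diff ht) (ht.diff hs)
    (hgs.mono_set sdiff_subset) (hgt.mono_set sdiff_subset) hsdiff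
    (measure_ne_top_of_subset sdiff_subset hfin) hle

end Exchange

section Reflection

variable {G E : Type*} [AddGroup G] [MeasurableSpace G] [MeasurableAdd G] [MeasurableNeg G]
  {μ : Measure G} [μ.IsNegInvariant] [μ.IsAddLeftInvariant] [NormedAddCommGroup E]
  {f : G → E} {c : G} {s : Set G}

lemma integrableOn_comp_sub_left_of_preimage_eq (hs : (c - ·) ⁻¹' s = s)
    (hf : IntegrableOn f s μ) : IntegrableOn (fun x ↦ f (c - x)) s μ := by
  have := ((Measure.measurePreserving_sub_left μ c).integrableOn_comp_preimage
    (measurableEmbedding_subLeft c)).2 hf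
  rwa [hs] at this

lemma setIntegral_comp_sub_left_of_preimage_eq [NormedSpace ℝ E] (hs : (c - ·) ⁻¹' s = s) :
    ∫ x in s, f (c - x) ∂μ = ∫ x in s, f x ∂μ := by
  have := (Measure.measurePreserving_sub_left μ c).setIntegral_preimage_emb
    (measurableEmbedding_subLeft c) f s
  rwa [hs] at this

lemma setIntegral_add_comp_sub_left_of_preimage_eq [NormedSpace ℝ E] (hs : (c - ·) ⁻¹' s = s)
    (hf : IntegrableOn f s μ) :
    ∫ x in s, (f x + f (c - x)) ∂μ = (2 : ℝ) • ∫ x in s, f x ∂μ := by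
  rw [integral_add hf (integrableOn_comp_sub_left_of_preimage_eq hs hf),
    setIntegral_comp_sub_left_of_preimage_eq hs, two_smul]

end Reflection

lemma preimage_sub_left_eq_self_of_subset_Ioo {G : Type*} [AddCommGroup G] [PartialOrder G]
    [IsOrderedAddMonoid G] {a b : G} {s : Set G} (hs : s ⊆ Ioo a b)
    (hsymm : ∀ x ∈ Ioo a b, x ∈ s ↔ a + b - x ∈ s) : (a + b - ·) ⁻¹' s = s := by
  ext x
  by_cases hx : x ∈ Ioo a b
  · exact (hsymm x hx).symm
  · refine iff_of_false (fun h ↦ hx ?_) (fun h ↦ hx (hs h))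
    simpa only [sub_mem_Ioo_iff_right, add_sub_cancel_left, add_sub_cancel_right] using hs h

lemma concaveOn_add_le_add_of_mem_segment {𝕜 E β : Type*} [Ring 𝕜] [PartialOrder 𝕜]
    [AddCommGroup E] [Module 𝕜 E] [AddCommMonoid β] [PartialOrder β] [IsOrderedAddMonoid β]
    [Module 𝕜 β] {s : Set E} {f : E → β} {u v x : E} (hf : ConcaveOn 𝕜 s f) (hu : u ∈ s)
    (hv : v ∈ s) (hx : x ∈ segment 𝕜 u v) : f u + f v ≤ f x + f (u + v - x) := by
  obtain ⟨p, q, hp, hq, hpq, rfl⟩ := hx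
  have hreflect : u + v - (p • u + q • v) = q • u + p • v := by
    rw [eq_sub_of_add_eq' hpq, sub_smul, sub_smul, one_smul, one_smul]
    abel
  calc f u + f v = (p + q) • f u + (p + q) • f v := by simp only [hpq, one_smul]
    _ = (p • f u + q • f v) + (q • f u + p • f v) := by simp only [add_smul]; abel
    _ ≤ f (p • u + q • v) + f (q • u + p • v) :=
      add_le_add (hf.2 hu hv hp hq hpq) (hf.2 hu hv hq hp (by rwa [add_comm]))
    _ = f (p • u + q • v) + f (u + v - (p • u + q • v)) := by rw [hreflect]

/-- The two-sided rejection region of total length `m` in `(a, b)`: the points within `m / 2` of an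
endpoint. The paper's `E_α` is `extremeTails 0 1 α`. -/
def extremeTails (a b m : ℝ) : Set ℝ := Ioo a (a + m / 2) ∪ Ioo (b - m / 2) b

namespace extremeTails

variable {a b m : ℝ}

lemma measurableSet : MeasurableSet (extremeTails a b m) :=
  measurableSet_Ioo.union measurableSet_Ioo

lemma subset_Ioo (hm : m ≤ b - a) : extremeTails a b m ⊆ Ioo a b := by
  rintro x (⟨hl, hr⟩ | ⟨hl, hr⟩) <;> constructor <;> linarith

lemma preimage_sub_left : (a + b - ·) ⁻¹' extremeTails a b m = extremeTails a b m := by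
  rw [extremeTails, preimage_union, preimage_const_sub_Ioo, preimage_const_sub_Ioo, union_comm]
  congr! 2 <;> ring

lemma volume_eq (hm₀ : 0 ≤ m) (hm : m ≤ b - a) :
    volume (extremeTails a b m) = ENNReal.ofReal m := by
  have hdisj : Disjoint (Ioo a (a + m / 2)) (Ioo (b - m / 2) b) :=
    disjoint_left.2 fun x hl hr ↦ by linarith [hl.2, hr.1]
  rw [extremeTails, measure_union hdisj measurableSet_Ioo, Real.volume_Ioo, Real.volume_Ioo,
    ← ENNReal.ofReal_add (by linarith) (by linarith)]
  ring_nf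

lemma mem_segment_of_notMem {x y : ℝ} (hx : x ∈ extremeTails a b m) (hy : y ∈ Ioo a b)
    (hym : y ∉ extremeTails a b m) : y ∈ segment ℝ x (a + b - x) := by
  have hly : a + m / 2 ≤ y := not_lt.1 fun h ↦ hym (.inl ⟨hy.1, h⟩)
  have hyr : y ≤ b - m / 2 := not_lt.1 fun h ↦ hym (.inr ⟨h, hy.2⟩)
  rw [segment_eq_uIcc, mem_uIcc]
  rcases hx with ⟨-, hx⟩ | ⟨hx, -⟩
  · left; constructor <;> linarith
  · right; constructor <;> linarith

lemma add_reflection_le_of_concaveOn {f : ℝ → ℝ} {x y : ℝ} (hf : ConcaveOn ℝ (Ioo a b) f)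
    (hm : m ≤ b - a) (hx : x ∈ extremeTails a b m) (hy : y ∈ Ioo a b)
    (hym : y ∉ extremeTails a b m) : f x + f (a + b - x) ≤ f y + f (a + b - y) := by
  have hx' : a + b - x ∈ extremeTails a b m := preimage_sub_left.symm.subset hx
  simpa only [add_sub_cancel] using concaveOn_add_le_add_of_mem_segment hf (subset_Ioo hm hx)
    (subset_Ioo hm hx') (mem_segment_of_notMem hx hy hym)

end extremeTails

theorem extreme_tails_least_powerful_concave_general {a b : ℝ} {f : ℝ → ℝ} {R : Set ℝ}
    (hab : a ≤ b) (hf : ConcaveOn ℝ (Ioo a b) f) (hfi : IntegrableOn f (Ioo a b))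
    (hR : MeasurableSet R) (hRsub : R ⊆ Ioo a b)
    (hRsymm : ∀ x ∈ Ioo a b, x ∈ R ↔ a + b - x ∈ R) :
    ∫ x in extremeTails a b (volume.real R), f x ≤ ∫ x in R, f x := by
  have hRle : volume.real R ≤ b - a := by
    simpa [hab] using measureReal_mono (μ := volume) hRsub measure_Ioo_lt_top.ne
  let E := extremeTails a b (volume.real R)
  have hE : MeasurableSet E := extremeTails.measurableSet
  have hEsub : E ⊆ Ioo a b := extremeTails.subset_Ioo hRle
  have hRfin : volume R ≠ ⊤ := measure_ne_top_of_subset hRsub measure_Ioo_lt_top.ne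
  have hER : volume E = volume R :=
    (extremeTails.volume_eq measureReal_nonneg hRle).trans (ofReal_measureReal hRfin)
  have hErefl : (a + b - ·) ⁻¹' E = E := extremeTails.preimage_sub_left
  have hRrefl : (a + b - ·) ⁻¹' R = R := preimage_sub_left_eq_self_of_subset_Ioo hRsub hRsymm
  have hfE := hfi.mono_set hEsub
  have hfR := hfi.mono_set hRsub
  have hle := setIntegral_le_setIntegral_of_forall_sdiff_le hE hR
    (hfE.add (integrableOn_comp_sub_left_of_preimage_eq hErefl hfE))
    (hfR.add (integrableOn_comp_sub_left_of_preimage_eq hRrefl hfR)) hER (hER ▸ hRfin)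
    fun x hx y hy ↦ extremeTails.add_reflection_le_of_concaveOn hf hRle hx.1 (hRsub hy.1) hy.2
  simp only [Pi.add_apply] at hle
  rw [setIntegral_add_comp_sub_left_of_preimage_eq hErefl hfE,
    setIntegral_add_comp_sub_left_of_preimage_eq hRrefl hfR] at hle
  exact le_of_smul_le_smul_left hle two_pos

theorem extreme_tails_least_powerful_concave (γ α : ℝ) (hγ0 : 0 < γ) (hγ1 : γ < 1)
    (hα0 : 0 < α) (hα1 : α < 1) (R : Set ℝ)
    (hRmeas : MeasurableSet R) (hRsub : R ⊆ Ioo 0 1)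
    (hRsym : ∀ x ∈ Ioo (0:ℝ) 1, x ∈ R ↔ 1 - x ∈ R)
    (hRvol : volume R = ENNReal.ofReal α) :
    ∫ x in R, (1+γ) * x ^ γ ∂volume ≥
      ∫ x in Ioo (0:ℝ) (α/2) ∪ Ioo (1 - α/2) 1, (1+γ) * x ^ γ ∂volume := by
  have hf : ConcaveOn ℝ (Ioo 0 1) fun x : ℝ ↦ (1 + γ) * x ^ γ :=
    ((Real.concaveOn_rpow hγ0.le hγ1.le).smul (by linarith)).subset
      (Ioo_subset_Ioi_self.trans Ioi_subset_Ici_self) (convex_Ioo 0 1)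
  have hfi : IntegrableOn (fun x : ℝ ↦ (1 + γ) * x ^ γ) (Ioo 0 1) :=
    (((Real.continuous_rpow_const hγ0.le).const_mul _).integrableOn_Icc).mono_set
      Ioo_subset_Icc_self
  simpa [extremeTails, measureReal_def, hRvol, hα0.le] using
    extreme_tails_least_powerful_concave_general zero_le_one hf hfi hRmeas hRsub
      (by simpa only [zero_add] using hRsym)
end

section
/- For every γ with 0 < γ < 1 and every α with 0 < α < 1, the power of the central test strictly exceeds the power of the extreme-tails test against f₁: ((1+α)/2)^{1+γ} − ((1−α)/2)^{1+γ} > (α/2)^{1+γ} + 1 − (1 − α/2)^{1+γ}. -/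
/-!
The function `x ↦ x ^ γ` is strictly concave for `0 < γ < 1`, and only this property of the density
matters. Let `F` be a primitive of a strictly concave `f` on `[0, 1]`. Then `x ↦ f x + f (1 - x)`
increases strictly up to `1 / 2`, so its primitive `G x = F x - F (1 - x)` is strictly convex on
`[0, 1 / 2]`. The points `α / 2` and `(1 - α) / 2` divide `[0, 1 / 2]` with interchanged weights,
hence `G (α / 2) + G ((1 - α) / 2) < G 0 + G (1 / 2) = F 0 - F 1`, which rearranges to the
comparison of the two powers.
-/

open Set

section SwappedWeights

variable {𝕜 E β : Type*} [Semiring 𝕜] [PartialOrder 𝕜] [AddCommMonoid E] [SMul 𝕜 E]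
  [AddCommMonoid β] [PartialOrder β] [IsOrderedCancelAddMonoid β] [Module 𝕜 β]
  {s : Set E} {f : E → β} {x y : E} {a b : 𝕜}

theorem add_swap_lt_add_of_strictConvexOn (hf : StrictConvexOn 𝕜 s f) (hx : x ∈ s) (hy : y ∈ s)
    (hxy : x ≠ y) (ha : 0 < a) (hb : 0 < b) (hab : a + b = 1) :
    f (a • x + b • y) + f (b • x + a • y) < f x + f y :=
  have hba : b + a = 1 := by rwa [add_comm]
  calc
    f (a • x + b • y) + f (b • x + a • y) < (a • f x + b • f y) + (b • f x + a • f y) :=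
      add_lt_add (hf.2 hx hy hxy ha hb hab) (hf.2 hx hy hxy hb ha hba)
    _ = (a + b) • f x + (b + a) • f y := by rw [add_add_add_comm, ← add_smul, ← add_smul]
    _ = f x + f y := by rw [hab, hba, one_smul, one_smul]

theorem add_lt_add_swap_of_strictConcaveOn (hf : StrictConcaveOn 𝕜 s f) (hx : x ∈ s) (hy : y ∈ s)
    (hxy : x ≠ y) (ha : 0 < a) (hb : 0 < b) (hab : a + b = 1) :
    f x + f y < f (a • x + b • y) + f (b • x + a • y) :=
  add_swap_lt_add_of_strictConvexOn (β := βᵒᵈ) hf.dual hx hy hxy ha hb hab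

end SwappedWeights

theorem strictConcaveOn_const_mul {𝕜 E : Type*} [CommSemiring 𝕜] [PartialOrder 𝕜]
    [IsStrictOrderedRing 𝕜] [AddCommMonoid E] [SMul 𝕜 E] {s : Set E} {f : E → 𝕜} {c : 𝕜}
    (hc : 0 < c) (hf : StrictConcaveOn 𝕜 s f) : StrictConcaveOn 𝕜 s fun x ↦ c * f x :=
  ⟨hf.1, fun x hx y hy hxy a b ha hb hab ↦
    calc
      a • (c * f x) + b • (c * f y) = c * (a • f x + b • f y) := by
        rw [mul_add, mul_smul_comm, mul_smul_comm]
      _ < c * f (a • x + b • y) := mul_lt_mul_of_pos_left (hf.2 hx hy hxy ha hb hab) hc⟩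

theorem strictMonoOn_add_reflect_of_strictConcaveOn {𝕜 β : Type*} [Field 𝕜] [LinearOrder 𝕜]
    [IsStrictOrderedRing 𝕜] [AddCommMonoid β] [PartialOrder β] [IsOrderedCancelAddMonoid β]
    [Module 𝕜 β] {s : Set 𝕜} {f : 𝕜 → β} {c : 𝕜} (hf : StrictConcaveOn 𝕜 s f)
    (hs : MapsTo (fun x ↦ c - x) s s) :
    StrictMonoOn (fun x ↦ f x + f (c - x)) (s ∩ Iic (c / 2)) := by
  rintro x ⟨hxs, -⟩ y ⟨-, hyc : y ≤ c / 2⟩ hxy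
  have hy : y ∈ openSegment 𝕜 x (c - x) := by
    rw [openSegment_eq_Ioo (by linarith)]
    constructor <;> linarith
  obtain ⟨a, b, ha, hb, hab, rfl⟩ := hy
  have hreflect : c - (a • x + b • (c - x)) = b • x + a • (c - x) := by
    simp only [smul_eq_mul]
    linear_combination (-c) * hab
  simpa only [hreflect] using
    add_lt_add_swap_of_strictConcaveOn hf hxs (hs hxs) (by linarith) ha hb hab

section Primitive

variable {F f : ℝ → ℝ}

theorem strictConvexOn_sub_reflect {a b : ℝ} (hF : ContinuousOn F (Icc a b))
    (hF' : ∀ x ∈ Ioo a b, HasDerivAt F (f x) x) (hf : StrictConcaveOn ℝ (Ioo a b) f) :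
    StrictConvexOn ℝ (Icc a ((a + b) / 2)) fun x ↦ F x - F (a + b - x) := by
  have hreflect : MapsTo (fun x ↦ a + b - x) (Ioo a b) (Ioo a b) := by
    rintro x ⟨hax, hxb⟩
    constructor <;> linarith
  have hleft : Ioo a ((a + b) / 2) ⊆ Ioo a b ∩ Iic ((a + b) / 2) := by
    rintro x ⟨hax, hxm⟩
    exact ⟨⟨hax, by linarith⟩, hxm.le⟩
  have hderiv : ∀ x ∈ Ioo a b,
      HasDerivAt (fun x ↦ F x - F (a + b - x)) (f x + f (a + b - x)) x := fun x hx ↦ by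
    simpa only [sub_neg_eq_add] using
      (hF' x hx).fun_sub ((hF' _ (hreflect hx)).comp_const_sub (a + b) x)
  refine StrictMonoOn.strictConvexOn_of_deriv (convex_Icc _ _) (ContinuousOn.sub ?_ ?_) ?_
  · exact hF.mono fun x ⟨hax, hxm⟩ ↦ ⟨hax, by linarith⟩
  · exact hF.comp (by fun_prop) fun x ⟨hax, hxm⟩ ↦ ⟨by linarith, by linarith⟩
  · rw [interior_Icc]
    exact ((strictMonoOn_add_reflect_of_strictConcaveOn hf hreflect).mono hleft).congr
      fun x hx ↦ (hderiv x (hleft hx).1).deriv.symm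

theorem central_beats_tails_concave_general {α : ℝ} (hF : ContinuousOn F (Icc 0 1))
    (hF' : ∀ x ∈ Ioo 0 1, HasDerivAt F (f x) x) (hf : StrictConcaveOn ℝ (Ioo 0 1) f)
    (hα0 : 0 < α) (hα1 : α < 1) :
    F ((1 + α) / 2) - F ((1 - α) / 2) > (F (α / 2) - F 0) + (F 1 - F (1 - α / 2)) := by
  have hG : StrictConvexOn ℝ (Icc 0 (1 / 2)) fun x ↦ F x - F (1 - x) := by
    simpa only [zero_add] using strictConvexOn_sub_reflect hF hF' hf
  have hswap := add_swap_lt_add_of_strictConvexOn hG (left_mem_Icc.2 (by norm_num))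
    (right_mem_Icc.2 (by norm_num)) (by norm_num) (sub_pos.2 hα1) hα0 (sub_add_cancel 1 α)
  have htail : (1 - α) • (0 : ℝ) + α • (1 / 2) = α / 2 := by simp only [smul_eq_mul]; ring
  have hcentral : α • (0 : ℝ) + (1 - α) • (1 / 2) = (1 - α) / 2 := by
    simp only [smul_eq_mul]; ring
  have hcentral_reflect : 1 - (1 - α) / 2 = (1 + α) / 2 := by ring
  simp only [htail, hcentral, hcentral_reflect, sub_zero, sub_half] at hswap
  linarith

end Primitive

theorem central_beats_tails_concave (γ α : ℝ) (hγ0 : 0 < γ) (hγ1 : γ < 1)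
    (hα0 : 0 < α) (hα1 : α < 1) :
    ((1+α)/2) ^ (1+γ) - ((1-α)/2) ^ (1+γ) >
      (α/2) ^ (1+γ) + 1 - (1 - α/2) ^ (1+γ) := by
  have hderiv (x : ℝ) : HasDerivAt (fun x ↦ x ^ (1 + γ)) ((1 + γ) * x ^ γ) x := by
    simpa only [add_sub_cancel_left] using
      Real.hasDerivAt_rpow_const (p := 1 + γ) (x := x) (Or.inr (by linarith))
  have hconcave : StrictConcaveOn ℝ (Ioo 0 1) fun x ↦ (1 + γ) * x ^ γ :=
    strictConcaveOn_const_mul (by linarith) <|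
      (Real.strictConcaveOn_rpow hγ0 hγ1).subset (fun _ hx ↦ hx.1.le) (convex_Ioo 0 1)
  have hpower := central_beats_tails_concave_general
    (Real.continuous_rpow_const (by linarith : 0 ≤ 1 + γ)).continuousOn
    (fun x _ ↦ hderiv x) hconcave hα0 hα1
  rwa [Real.zero_rpow (by linarith), Real.one_rpow, sub_zero, ← add_sub_assoc] at hpower
end

section
/- For every γ > 1 and every α with 0 < α < 1, the power of the extreme-tails test strictly exceeds the power of the central test against f₁: (α/2)^{1+γ} + 1 − (1 − α/2)^{1+γ} > ((1+α)/2)^{1+γ} − ((1−α)/2)^{1+γ}. -/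
/-!
Fold a strictly convex density `f` on `(u, v)` about the midpoint `m`. Both rejection regions are
symmetric about `m`, so the two powers only involve `h x = f x + f (u + v - x)`, which is strictly
decreasing on `(u, m)` by strict convexity of `f`. A primitive of `-h` is therefore strictly convex
on `[u, m]`, and the power comparison is its convexity inequality for the pairs `{u, m}` and
`{u + t, m - t}`, which have the same sum.
-/

open Set

theorem strictConvexOn_const_smul {𝕜 E β : Type*} [CommSemiring 𝕜] [PartialOrder 𝕜]
    [AddCommMonoid E] [SMul 𝕜 E] [AddCommMonoid β] [PartialOrder β] [Module 𝕜 β]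
    [PosSMulStrictMono 𝕜 β] {s : Set E} {f : E → β} {c : 𝕜} (hc : 0 < c)
    (hf : StrictConvexOn 𝕜 s f) : StrictConvexOn 𝕜 s fun x ↦ c • f x :=
  ⟨hf.1, fun x hx y hy hxy a b ha hb hab ↦
    calc c • f (a • x + b • y) < c • (a • f x + b • f y) :=
          smul_lt_smul_of_pos_left (hf.2 hx hy hxy ha hb hab) hc
      _ = a • c • f x + b • c • f y := by rw [smul_add, smul_comm c, smul_comm c]⟩

section OrderedField

variable {𝕜 β : Type*} [Field 𝕜] [LinearOrder 𝕜] [IsStrictOrderedRing 𝕜]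
  [AddCommMonoid β] [PartialOrder β] [IsOrderedCancelAddMonoid β] [Module 𝕜 β]
  {s : Set 𝕜} {f : 𝕜 → β}

theorem strictConvexOn_map_add_map_lt_of_add_eq {x y z w : 𝕜} (hf : StrictConvexOn 𝕜 s f)
    (hx : x ∈ s) (hw : w ∈ s) (hy : y ∈ Ioo x w) (hsum : y + z = x + w) :
    f y + f z < f x + f w := by
  have hxw : x < w := hy.1.trans hy.2
  obtain ⟨a, b, ha, hb, hab, rfl⟩ : y ∈ openSegment 𝕜 x w := by rwa [openSegment_eq_Ioo hxw]
  obtain rfl : z = b • x + a • w := by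
    simp only [smul_eq_mul] at hsum ⊢
    linear_combination hsum - (x + w) * hab
  calc f (a • x + b • w) + f (b • x + a • w)
      < (a • f x + b • f w) + (b • f x + a • f w) :=
        add_lt_add (hf.2 hx hw hxw.ne ha hb hab)
          (hf.2 hx hw hxw.ne hb ha ((add_comm b a).trans hab))
    _ = (a + b) • f x + (a + b) • f w := by module
    _ = f x + f w := by rw [hab, one_smul, one_smul]

theorem strictAntiOn_add_reflect {c : 𝕜} (hf : StrictConvexOn 𝕜 s f)
    (hs : ∀ x ∈ s, c - x ∈ s) :
    StrictAntiOn (fun x ↦ f x + f (c - x)) (s ∩ Iic (c / 2)) := by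
  rintro x ⟨hx, -⟩ y ⟨-, hyc⟩ hxy
  rw [mem_Iic] at hyc
  exact strictConvexOn_map_add_map_lt_of_add_eq hf hx (hs x hx) ⟨hxy, by linarith⟩ (by ring)

end OrderedField

section Primitive

variable {F f : ℝ → ℝ} {u v t : ℝ}

theorem strictConvexOn_reflect_sub (hFc : ContinuousOn F (Icc u v))
    (hF : ∀ x ∈ Ioo u v, HasDerivAt F (f x) x) (hf : StrictConvexOn ℝ (Ioo u v) f) :
    StrictConvexOn ℝ (Icc u ((u + v) / 2)) fun x ↦ F (u + v - x) - F x := by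
  have hreflect : ∀ x ∈ Ioo u v, u + v - x ∈ Ioo u v := fun x hx ↦
    ⟨by linarith [hx.2], by linarith [hx.1]⟩
  refine StrictMonoOn.strictConvexOn_of_deriv (convex_Icc _ _) ?_ ?_
  · refine (hFc.comp (by fun_prop) ?_).sub (hFc.mono ?_) <;>
      exact fun x hx ↦ ⟨by linarith [hx.1, hx.2], by linarith [hx.1, hx.2]⟩
  · have hsub : Ioo u ((u + v) / 2) ⊆ Ioo u v ∩ Iic ((u + v) / 2) := fun x hx ↦
      ⟨⟨hx.1, by linarith [hx.1, hx.2]⟩, hx.2.le⟩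
    have hderiv : ∀ x ∈ Ioo u ((u + v) / 2),
        deriv (fun x ↦ F (u + v - x) - F x) x = -(f x + f (u + v - x)) := fun x hx ↦ by
      have hx' := (hsub hx).1
      rw [(((hF _ (hreflect x hx')).comp_const_sub (u + v) x).fun_sub (hF x hx')).deriv]
      ring
    rw [interior_Icc]
    exact ((strictAntiOn_add_reflect hf hreflect).mono hsub).neg.congr
      fun x hx ↦ (hderiv x hx).symm

theorem tails_beat_central_convex_general (hFc : ContinuousOn F (Icc u v))
    (hF : ∀ x ∈ Ioo u v, HasDerivAt F (f x) x) (hf : StrictConvexOn ℝ (Ioo u v) f)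
    (ht : t ∈ Ioo 0 ((v - u) / 2)) :
    F (u + t) - F u + (F v - F (v - t)) > F ((u + v) / 2 + t) - F ((u + v) / 2 - t) := by
  obtain ⟨ht₀, ht₁⟩ := ht
  have hpair := strictConvexOn_map_add_map_lt_of_add_eq (strictConvexOn_reflect_sub hFc hF hf)
    (x := u) (y := u + t) (z := (u + v) / 2 - t) (w := (u + v) / 2)
    ⟨le_rfl, by linarith⟩ ⟨by linarith, le_rfl⟩ ⟨by linarith, by linarith⟩ (by ring)
  have hmid : u + v - ((u + v) / 2 - t) = (u + v) / 2 + t := by ring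
  rw [add_sub_add_left_eq_sub, hmid, add_sub_cancel_left, sub_half] at hpair
  linarith

end Primitive

theorem strictConvexOn_one_add_mul_rpow {γ : ℝ} (hγ : 1 < γ) :
    StrictConvexOn ℝ (Ici 0) fun x : ℝ ↦ (1 + γ) * x ^ γ :=
  strictConvexOn_const_smul (by linarith) (strictConvexOn_rpow hγ)

theorem hasDerivAt_rpow_one_add {γ : ℝ} (hγ : 0 ≤ γ) (x : ℝ) :
    HasDerivAt (fun x : ℝ ↦ x ^ (1 + γ)) ((1 + γ) * x ^ γ) x := by
  simpa using Real.hasDerivAt_rpow_const (x := x) (p := 1 + γ) (Or.inr (by linarith))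

theorem tails_beat_central_convex (γ α : ℝ) (hγ : 1 < γ)
    (hα0 : 0 < α) (hα1 : α < 1) :
    (α/2) ^ (1+γ) + 1 - (1 - α/2) ^ (1+γ) >
      ((1+α)/2) ^ (1+γ) - ((1-α)/2) ^ (1+γ) := by
  have hderiv := hasDerivAt_rpow_one_add (zero_lt_one.trans hγ).le
  have hpower := tails_beat_central_convex_general (t := α / 2)
    (fun x _ ↦ (hderiv x).continuousAt.continuousWithinAt) (fun x _ ↦ hderiv x)
    ((strictConvexOn_one_add_mul_rpow hγ).subset (fun _ hx ↦ hx.1.le) (convex_Ioo 0 1))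
    ⟨by linarith, by linarith⟩
  have hne : 1 + γ ≠ 0 := by linarith
  simpa [Real.zero_rpow hne, add_div, sub_div, add_sub_assoc] using hpower
end

section
/- For every α with 0 < α < 1/2 there exists γ₀ > 0 such that for all γ with 0 < γ < γ₀, the Type III error probability of the central directional pair under f₁ strictly exceeds the null value α/2: (1/2)^{1+γ} − ((1−α)/2)^{1+γ} > α/2. -/
/-!
Write `b = (1 - α) / 2`. At `γ = 0` the error probability `(1/2) ^ (1 + γ) - b ^ (1 + γ)` is
exactly `α / 2`, and its derivative there is `(1/2) * log (1/2) - b * log b`. Since `x * log x` is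
strictly convex and takes the same value at `1/4` and `1/2`, this derivative is positive for `b`
strictly between these points, that is, for `0 < α < 1/2`.
-/

open Real Set Filter Topology

theorem eventually_nhdsGT_lt_of_hasDerivWithinAt_pos {f : ℝ → ℝ} {f' x : ℝ}
    (hf : HasDerivWithinAt f f' (Ioi x) x) (hf' : 0 < f') : ∀ᶠ y in 𝓝[>] x, f x < f y := by
  have h_slope : Tendsto (slope f x) (𝓝[>] x) (𝓝 f') :=
    (hasDerivWithinAt_iff_tendsto_slope' self_notMem_Ioi).1 hf
  filter_upwards [h_slope.eventually_const_lt hf', self_mem_nhdsWithin] with y hy hxy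
  exact (slope_pos_iff hxy).1 hy

theorem eventually_nhdsGT_rpow_sub_rpow_lt {a b p : ℝ} (ha : 0 < a) (hb : 0 < b)
    (hab : b ^ p * log b < a ^ p * log a) :
    ∀ᶠ q in 𝓝[>] p, a ^ p - b ^ p < a ^ q - b ^ q := by
  have h_deriv : HasDerivAt (fun q ↦ a ^ q - b ^ q) (a ^ p * log a - b ^ p * log b) p :=
    (hasStrictDerivAt_const_rpow ha p).hasDerivAt.sub (hasStrictDerivAt_const_rpow hb p).hasDerivAt
  exact eventually_nhdsGT_lt_of_hasDerivWithinAt_pos h_deriv.hasDerivWithinAt (sub_pos.2 hab)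

theorem mul_log_lt_half_mul_log_half {x : ℝ} (hx : x ∈ Ioo (1 / 4) (1 / 2)) :
    x * log x < 1 / 2 * log (1 / 2) := by
  have h_eq : (1 / 4 : ℝ) * log (1 / 4) = 1 / 2 * log (1 / 2) := by
    rw [show (1 / 4 : ℝ) = (1 / 2) ^ 2 by norm_num, log_pow]
    ring
  have h_lt : x * log x < max (1 / 4 * log (1 / 4)) (1 / 2 * log (1 / 2)) :=
    strictConvexOn_mul_log.lt_on_openSegment (by norm_num) (by norm_num) (by norm_num)
      (Ioo_subset_openSegment hx)
  rwa [h_eq, max_self] at h_lt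

theorem typeIII_exceeds_null_for_small_gamma (α : ℝ) (hα0 : 0 < α) (hα1 : α < 1/2) :
    ∃ γ₀ > (0:ℝ), ∀ γ : ℝ, 0 < γ → γ < γ₀ →
      (1/2 : ℝ) ^ (1+γ) - ((1-α)/2) ^ (1+γ) > α/2 := by
  have h_log : (1 - α) / 2 * log ((1 - α) / 2) < 1 / 2 * log (1 / 2) :=
    mul_log_lt_half_mul_log_half ⟨by linarith, by linarith⟩
  have h_ev : ∀ᶠ p in 𝓝[>] (1 : ℝ),
      (1 / 2 : ℝ) ^ (1 : ℝ) - ((1 - α) / 2) ^ (1 : ℝ) < (1 / 2) ^ p - ((1 - α) / 2) ^ p :=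
    eventually_nhdsGT_rpow_sub_rpow_lt (by norm_num) (by linarith)
      (by simpa only [rpow_one] using h_log)
  obtain ⟨u, hu, h_Ioo⟩ := mem_nhdsGT_iff_exists_Ioo_subset.1 h_ev
  refine ⟨u - 1, sub_pos.2 hu, fun γ hγ0 hγ ↦ ?_⟩
  calc α / 2 = (1 / 2) ^ (1 : ℝ) - ((1 - α) / 2) ^ (1 : ℝ) := by simp only [rpow_one]; ring
    _ < (1 / 2) ^ (1 + γ) - ((1 - α) / 2) ^ (1 + γ) := h_Ioo ⟨by linarith, by linarith⟩
end
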